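/- Let d ≥ 1. There exists c > 0 such that for every λ ≥ 1 there exists C_λ < ∞ with the following property. For any Lebesgue measurable set E ⊂ ℝ^d satisfying |E| = |𝔹| (𝔹 the closed unit ball), λ|E Δ 𝔹| ≤ c, and E Δ 𝔹 ⊂ {x : | |x| − 1 | ≤ λ|E Δ 𝔹|}, there exists v ∈ ℝ^d such that: E + v is balanced up to degree 1; |v| ≤ C_λ |E Δ 𝔹|; and (E + v) Δ 𝔹 ⊂ {x : | |x| − 1 | ≤ C_λ |E Δ 𝔹|}. -/

import Mathlib

/-!
In polar coordinates, `E + v` is balanced up to degree `1` as soon as `|E| = |𝔹|` and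
`∫_E (x + v) / ‖x + v‖ dx = 0` (`balanced_of_integral`). The latter is the first-order condition for
a minimizer of the function `Φ_E(v) = ∫_E ‖x + v‖ dx`, which is continuous and coercive, so such a
`v` exists: `-v` is a geometric median of `E` (`exists_median`, `median_balanced`).

The bound on `‖v‖` comes from comparing `Φ_E` with `Φ_𝔹`. From `Φ_E(v) ≤ Φ_E(0)` one gets
`Φ_𝔹(v) - Φ_𝔹(0) ≤ |E Δ 𝔹| ‖v‖` (`median_small`), whereas
`Φ_𝔹(v) - Φ_𝔹(0) ≥ (κ / 16) ‖v‖ min(‖v‖, 1)`, where `κ` is the volume of a ball of radius `1/8`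
(`ball_growth`). Hence `min(‖v‖, 1) ≤ 16 |E Δ 𝔹| / κ`, and if `|E Δ 𝔹| ≤ κ / 32` the minimum is
`‖v‖` itself. The inclusion for `(E + v) Δ 𝔹` is the triangle inequality.
-/

open MeasureTheory Set

noncomputable section

/-- `ℝ^d` with Lebesgue measure. -/
abbrev Vec (d : ℕ) := EuclideanSpace ℝ (Fin d)

/-- Indicator function of a set, with value `1 : ℝ`. -/
def ind {d : ℕ} (E : Set (Vec d)) : Vec d → ℝ := E.indicator 1

/-- The rotation-invariant measure `σ` on the unit sphere `S^{d-1}`, normalized so that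
Lebesgue measure equals `r^{d-1} dr dσ(θ)` in polar coordinates. -/
def sphereMeasure (d : ℕ) : Measure (Metric.sphere (0 : Vec d) 1) :=
  (volume : Measure (Vec d)).toSphere

/-- The radial profile function `F_E(θ) = ∫_0^∞ (1_E − 1_𝔹)(tθ) t^{d−1} dt` associated
to a set `E` with `|E| = |𝔹|`. -/
def FE {d : ℕ} (E : Set (Vec d)) (θ : Vec d) : ℝ :=
  ∫ t in Set.Ioi (0 : ℝ),
    (ind E (t • θ) - ind (Metric.closedBall (0 : Vec d) 1) (t • θ)) * t ^ (d - 1)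

/-- `E` is balanced up to degree `D`: `∫_{S^{d−1}} F_E(y) P(y) dσ(y) = 0` for every real
polynomial `P` of degree at most `D`. -/
def BalancedUpTo (d D : ℕ) (E : Set (Vec d)) : Prop :=
  ∀ P : MvPolynomial (Fin d) ℝ, P.totalDegree ≤ D →
    (∫ θ : Metric.sphere (0 : Vec d) 1,
      FE E θ * MvPolynomial.eval (fun i => (θ : Vec d) i) P ∂(sphereMeasure d)) = 0


open scoped Pointwise RealInnerProductSpace

/-! ### Polar coordinates and polynomials of degree at most one -/

/-- Integration in polar coordinates on `ℝ^d`, with the normalization of `sphereMeasure`. -/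
lemma integral_polar {d : ℕ} (hd : 1 ≤ d) {f : Vec d → ℝ} (hf : Integrable f) :
    ∫ θ : Metric.sphere (0 : Vec d) 1,
      (∫ t in Ioi (0 : ℝ), f (t • (θ : Vec d)) * t ^ (d - 1)) ∂(sphereMeasure d) = ∫ x, f x := by
  have : Nonempty (Fin d) := ⟨⟨0, hd⟩⟩
  have hfin : Module.finrank ℝ (Vec d) = d := by simp
  have hmp := (volume : Measure (Vec d)).measurePreserving_homeomorphUnitSphereProd
  have hmp' := hmp.symm (homeomorphUnitSphereProd (Vec d)).toMeasurableEquiv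
  rw [hfin] at hmp'
  have hemb : MeasurableEmbedding
      ((homeomorphUnitSphereProd (Vec d)).toMeasurableEquiv.symm) :=
    MeasurableEquiv.measurableEmbedding _
  have h0 : ∫ x, f x = ∫ x : ({(0 : Vec d)}ᶜ : Set (Vec d)), f x ∂(volume.comap Subtype.val) := by
    rw [integral_subtype_comap (measurableSet_singleton _).compl f,
      restrict_compl_singleton]
  have hint : Integrable (fun x : ({(0 : Vec d)}ᶜ : Set (Vec d)) => f x) (volume.comap Subtype.val) := by
    have h := (integrableOn_iff_comap_subtypeVal
      (measurableSet_singleton (0 : Vec d)).compl).1 hf.integrableOn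
    simpa only [Function.comp_def] using h
  have hint2 : Integrable
      (fun p => f ((homeomorphUnitSphereProd (Vec d)).toMeasurableEquiv.symm p))
      ((volume : Measure (Vec d)).toSphere.prod (.volumeIoiPow (d - 1))) :=
    (hmp'.integrable_comp_emb hemb).2 hint
  rw [h0, ← hmp'.integral_comp hemb, integral_prod _ hint2]
  unfold sphereMeasure
  refine integral_congr_ae (Filter.Eventually.of_forall fun θ => ?_)
  simp only [Measure.volumeIoiPow]
  rw [integral_withDensity_eq_integral_toReal_smul (by fun_prop) (by simp)]
  rw [← integral_subtype_comap measurableSet_Ioi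
    (fun t : ℝ => f (t • (θ : Vec d)) * t ^ (d - 1))]
  refine integral_congr_ae (Filter.Eventually.of_forall fun t => ?_)
  have ht : (0:ℝ) < t := t.2
  simp [ENNReal.toReal_ofReal (pow_nonneg ht.le _), mul_comm]

lemma eval_affine {d : ℕ} (P : MvPolynomial (Fin d) ℝ) (hP : P.totalDegree ≤ 1) :
    ∃ (a : ℝ) (w : Vec d), ∀ x : Vec d,
      MvPolynomial.eval (fun i => x i) P = a + ⟪x, w⟫ := by
  have key : ∀ m : Fin d →₀ ℕ, m.degree ≤ 1 → ∀ c : ℝ, ∃ (a : ℝ) (w : Vec d), ∀ x : Vec d,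
      c * ∏ i, x i ^ m i = a + ⟪x, w⟫ := by
    intro m hm c
    by_cases h : m = 0
    · exact ⟨c, 0, fun x => by simp [h]⟩
    · obtain ⟨i, hi⟩ : ∃ i, m = Finsupp.single i 1 := by
        obtain ⟨i, hi⟩ := Finsupp.ne_iff.1 h
        refine ⟨i, ?_⟩
        have hle : ∑ j, m j ≤ 1 := by rwa [Finsupp.degree_eq_sum] at hm
        have hsplit := Finset.add_sum_erase Finset.univ (fun j => m j) (Finset.mem_univ i)
        simp only [Finsupp.coe_zero, Pi.zero_apply] at hi
        have hz : ∑ j ∈ Finset.univ.erase i, m j = 0 := by omega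
        ext j
        by_cases hj : j = i
        · subst hj; simp; omega
        · rw [Finset.sum_eq_zero_iff] at hz
          rw [hz j (by simp [hj]), Finsupp.single_eq_of_ne hj]
      refine ⟨0, EuclideanSpace.single i c, fun x => ?_⟩
      have : ∏ j, x j ^ m j = x i := by
        rw [Finset.prod_eq_single i] <;> simp +contextual [hi, eq_comm]
      rw [this]
      simp [EuclideanSpace.inner_single_right]
  have hdeg : ∀ m ∈ P.support, m.degree ≤ 1 := fun m hm =>
    (show m.degree ≤ P.totalDegree from MvPolynomial.le_totalDegree hm).trans hP
  choose! a w haw using fun (m : Fin d →₀ ℕ) (hm : m ∈ P.support) =>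
    key m (hdeg m hm) (P.coeff m)
  refine ⟨∑ m ∈ P.support, a m, ∑ m ∈ P.support, w m, fun x => ?_⟩
  rw [MvPolynomial.eval_eq', inner_sum, ← Finset.sum_add_distrib]
  exact Finset.sum_congr rfl fun m hm => haw m hm x

/-! ### Existence of a geometric median and its first-order condition -/

lemma norm_add_sub_norm_le {d : ℕ} (x v : Vec d) : |‖x + v‖ - ‖x‖| ≤ ‖v‖ := by
  simpa using abs_norm_sub_norm_le (x + v) x

lemma integrableOn_norm_add {d : ℕ} {E : Set (Vec d)} (hb : Bornology.IsBounded E) (v : Vec d) :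
    IntegrableOn (fun x => ‖x + v‖) E := by
  obtain ⟨R, hR⟩ := hb.subset_closedBall 0
  exact ((by fun_prop : Continuous fun x : Vec d => ‖x + v‖).continuousOn.integrableOn_compact
    (isCompact_closedBall 0 R)).mono_set hR

/-- A bounded set of positive measure has a geometric median: `v ↦ ∫_E ‖x + v‖ dx` is Lipschitz and
tends to infinity with `‖v‖`, so it attains its minimum. -/
lemma exists_median {d : ℕ} {E : Set (Vec d)} (hb : Bornology.IsBounded E) (hpos : volume E ≠ 0) :
    ∃ v : Vec d, ∀ u : Vec d, ∫ x in E, ‖x + v‖ ≤ ∫ x in E, ‖x + u‖ := by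
  have hfin : volume E ≠ ⊤ := hb.measure_lt_top.ne
  have hm : 0 < volume.real E := ENNReal.toReal_pos hpos hfin
  have hconst : ∀ a : ℝ, IntegrableOn (fun _ : Vec d => a) E := fun a => integrableOn_const hfin
  have hlip : LipschitzWith (volume.real E).toNNReal (fun v : Vec d => ∫ x in E, ‖x + v‖) := by
    refine LipschitzWith.of_le_add_mul _ fun u v => ?_
    rw [Real.coe_toNNReal _ hm.le]
    have h : ∫ x in E, ‖x + u‖ ≤ ∫ x in E, (‖x + v‖ + dist u v) := by
      refine setIntegral_mono (integrableOn_norm_add hb u)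
        ((integrableOn_norm_add hb v).add (hconst _)) fun x => ?_
      have := norm_add_le (x + v) (u - v)
      rw [dist_eq_norm]
      simpa using this
    rw [integral_add (integrableOn_norm_add hb v) (hconst _), setIntegral_const] at h
    simpa using h
  refine hlip.continuous.exists_forall_le' 0 ?_
  have hev : ∀ᶠ v : Vec d in Filter.cocompact (Vec d),
      2 * (∫ x in E, ‖x + (0 : Vec d)‖) / volume.real E ≤ ‖v‖ :=
    tendsto_norm_cocompact_atTop.eventually_ge_atTop _
  filter_upwards [hev] with v hv
  rw [div_le_iff₀ hm] at hv
  have h : ∫ x in E, (‖v‖ - ‖x + (0 : Vec d)‖) ≤ ∫ x in E, ‖x + v‖ := by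
    refine setIntegral_mono ((hconst _).sub (integrableOn_norm_add hb 0))
      (integrableOn_norm_add hb v) fun x => ?_
    have := norm_sub_le (x + v) x
    simp at this ⊢
    linarith
  rw [integral_sub (hconst _) (integrableOn_norm_add hb 0), setIntegral_const] at h
  simp only [smul_eq_mul] at h
  linarith

lemma hasDerivAt_norm_line {d : ℕ} {y : Vec d} (hy : y ≠ 0) (w : Vec d) :
    HasDerivAt (fun t : ℝ => ‖y + t • w‖) (⟪‖y‖⁻¹ • y, w⟫) 0 := by
  have h1 : HasDerivAt (fun t : ℝ => y + t • w) w 0 := by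
    simpa using ((hasDerivAt_id (0 : ℝ)).smul_const w).const_add y
  have h2 := h1.norm_sq.sqrt (by simpa using hy)
  simp only [Real.sqrt_sq (norm_nonneg _), zero_smul, add_zero] at h2
  convert h2 using 1
  rw [real_inner_smul_left]
  ring

/-- First-order condition at the minimizer of `v ↦ ∫_E ‖x + v‖ dx`. Differentiation under the
integral is legitimate because the norm is `1`-Lipschitz and differentiable off the null set
`{x = -v}`. -/
lemma median_balanced {d : ℕ} (hd : 1 ≤ d) {E : Set (Vec d)}
    (hb : Bornology.IsBounded E) {v : Vec d}
    (hv : ∀ u : Vec d, ∫ x in E, ‖x + v‖ ≤ ∫ x in E, ‖x + u‖) (w : Vec d) :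
    ∫ x in E, ⟪‖x + v‖⁻¹ • (x + v), w⟫ = 0 := by
  have : Nonempty (Fin d) := ⟨⟨0, hd⟩⟩
  have hfin : volume E ≠ ⊤ := hb.measure_lt_top.ne
  have hne : ∀ᵐ x ∂(volume.restrict E), x + v ≠ 0 := by
    refine ae_restrict_of_ae ?_
    filter_upwards [Measure.ae_ne volume (-v)] with x hx h
    exact hx (eq_neg_of_add_eq_zero_left h)
  have := hasDerivAt_integral_of_dominated_loc_of_lip (μ := volume.restrict E)
    (F := fun (t : ℝ) (x : Vec d) => ‖(x + v) + t • w‖)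
    (F' := fun x => ⟪‖x + v‖⁻¹ • (x + v), w⟫) (x₀ := 0) (s := univ) (bound := fun _ => ‖w‖)
    Filter.univ_mem (Filter.Eventually.of_forall fun t => by fun_prop)
    (by simpa [IntegrableOn] using integrableOn_norm_add hb v)
    (by
      refine Measurable.aestronglyMeasurable ?_
      fun_prop)
    (Filter.Eventually.of_forall fun x => by
      refine LipschitzOnWith.of_le_add_mul _ fun s _ t _ => ?_
      have h := norm_add_le ((x + v) + t • w) ((s - t) • w)
      rw [norm_smul] at h
      have e : (x + v) + t • w + (s - t) • w = (x + v) + s • w := by rw [sub_smul]; abel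
      rw [e] at h
      simpa [Real.dist_eq, mul_comm] using h)
    (integrableOn_const hfin)
    (hne.mono fun x hx => hasDerivAt_norm_line hx w)
  refine IsLocalMin.hasDerivAt_eq_zero (a := 0) (Filter.Eventually.of_forall fun t => ?_) this.2
  simpa [add_assoc] using hv (v + t • w)

/-! ### Growth of the potential of the ball -/

/-- Quadratic (for small `v`) growth of `v ↦ ∫_𝔹 ‖x + v‖ dx` away from `v = 0`. Since `𝔹` is the
sublevel set `{‖x‖ - 1 ≤ 0}`, translating it can only increase the integral of `‖x‖ - 1`; the gain
is at least `‖v‖ / 4` on the part of `𝔹` within distance `min(‖v‖, 1) / 4` of the sphere and making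
an angle at most `60°` with `v`, all of which is pushed outside the ball of radius
`1 + ‖v‖ / 4`. -/
lemma ball_growth {d : ℕ} (hd : 1 ≤ d) (v : Vec d) :
    volume.real (Metric.closedBall (0 : Vec d) (1 / 8)) / 16 * ‖v‖ * min ‖v‖ 1 ≤
      (∫ x in Metric.closedBall (0 : Vec d) 1, ‖x + v‖) -
        ∫ x in Metric.closedBall (0 : Vec d) 1, ‖x‖ := by
  rcases eq_or_ne v 0 with rfl | hv
  · simp
  set κ := volume.real (Metric.closedBall (0 : Vec d) (1 / 8)) with hκ
  set B := Metric.closedBall (0 : Vec d) 1 with hB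
  have hr : 0 < ‖v‖ := norm_pos_iff.2 hv
  set r := ‖v‖ with hrdef
  set s := min r 1 / 4 with hs
  have hs0 : 0 < s := by positivity
  have hs1 : s ≤ 1 / 4 := by rw [hs]; linarith [min_le_right r 1]
  have hsr : s ≤ r / 4 := by rw [hs]; linarith [min_le_left r 1]
  -- The sector of half-angle `60°` about the direction of `v`.
  set A : Set (Vec d) := {y | ‖y‖ ≤ 1 ∧ ‖y‖ * r / 2 ≤ ⟪y, v⟫} with hA
  have hAB : A ⊆ B := fun y hy => by simpa [hB] using hy.1
  have hAc : IsClosed A :=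
    (isClosed_le continuous_norm continuous_const).inter
      (isClosed_le (f := fun y : Vec d => ‖y‖ * r / 2) (g := fun y : Vec d => ⟪y, v⟫)
        (by fun_prop) (by fun_prop))
  have hAfin : volume A ≠ ⊤ :=
    ((measure_mono hAB).trans_lt Metric.isBounded_closedBall.measure_lt_top).ne
  have hκA : κ ≤ volume.real A := by
    have hsub : Metric.closedBall ((1 / 2 : ℝ) • r⁻¹ • v) (1 / 8) ⊆ A := by
      intro y hy
      rw [mem_closedBall_iff_norm] at hy
      set e := r⁻¹ • v with he
      have hen : ‖e‖ = 1 := by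
        rw [he, norm_smul, norm_inv, norm_norm, inv_mul_cancel₀ hr.ne']
      have hve : v = r • e := by rw [he, smul_inv_smul₀ hr.ne']
      set z := y - (1 / 2 : ℝ) • e with hz
      have hy' : y = (1 / 2 : ℝ) • e + z := by rw [hz]; abel
      have hyn : ‖y‖ ≤ 5 / 8 := by
        rw [hy']
        refine (norm_add_le _ _).trans ?_
        rw [norm_smul, hen]
        norm_num
        linarith
      have hze : -(1 / 8) ≤ ⟪z, e⟫ := by
        have h1 := abs_real_inner_le_norm z e
        rw [hen, mul_one] at h1
        linarith [neg_abs_le ⟪z, e⟫]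
      refine ⟨by linarith, ?_⟩
      have hin : ⟪y, e⟫ = 1 / 2 + ⟪z, e⟫ := by
        rw [hy', inner_add_left, real_inner_smul_left, real_inner_self_eq_norm_sq, hen]
        norm_num
      have : ⟪y, v⟫ = r * ⟪y, e⟫ := by rw [hve, real_inner_smul_right]
      rw [this, hin]
      nlinarith
    calc κ = volume.real (Metric.closedBall ((1 / 2 : ℝ) • r⁻¹ • v) (1 / 8)) := by
          rw [hκ, measureReal_def, measureReal_def,
            Measure.addHaar_closedBall_center volume ((1 / 2 : ℝ) • r⁻¹ • v)]
      _ ≤ volume.real A := measureReal_mono hsub hAfin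
  -- The outer shell of the sector, whose measure is computed by homogeneity.
  set S := A \ ((1 - s) • A) with hS
  have hSm : MeasurableSet S :=
    hAc.measurableSet.diff (hAc.smul_of_ne_zero (by linarith : (1 - s) ≠ 0)).measurableSet
  have hSB : S ⊆ B := sdiff_subset.trans hAB
  have hSfin : volume S ≠ ⊤ :=
    ((measure_mono hSB).trans_lt Metric.isBounded_closedBall.measure_lt_top).ne
  have hSA : s * volume.real A ≤ volume.real S := by
    have h1 : volume.real ((1 - s) • A) = (1 - s) ^ d * volume.real A := by
      rw [measureReal_def, Measure.addHaar_smul_of_nonneg volume (by linarith), ENNReal.toReal_mul,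
        ENNReal.toReal_ofReal (by apply pow_nonneg; linarith)]
      simp [measureReal_def]
    have h2 : volume.real A - volume.real ((1 - s) • A) ≤ volume.real S :=
      le_measureReal_sdiff (by
        rw [Measure.addHaar_smul_of_nonneg volume (by linarith)]
        exact ENNReal.mul_ne_top ENNReal.ofReal_ne_top hAfin)
    have h3 : (1 - s) ^ d ≤ 1 - s := pow_le_of_le_one (by linarith) (by linarith) (by omega)
    rw [h1] at h2
    nlinarith [measureReal_nonneg (μ := volume) (s := A)]
  have hSv : ∀ y ∈ S, 1 + r / 4 ≤ ‖y + v‖ := by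
    rintro y ⟨⟨hy1, hy2⟩, hy3⟩
    have hlow : 1 - s ≤ ‖y‖ := by
      by_contra! hlt
      apply hy3
      have hpos : 0 < 1 - s := by linarith
      refine (mem_smul_set_iff_inv_smul_mem₀ hpos.ne' _ _).2 ⟨?_, ?_⟩
      · rw [norm_smul, Real.norm_of_nonneg (by positivity), inv_mul_le_iff₀ hpos]
        linarith
      · rw [norm_smul, Real.norm_of_nonneg (by positivity), real_inner_smul_left, mul_assoc,
          mul_div_assoc]
        exact mul_le_mul_of_nonneg_left hy2 (by positivity)
    have hsq : (‖y‖ + r / 2) ^ 2 ≤ ‖y + v‖ ^ 2 := by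
      rw [norm_add_sq_real]
      nlinarith
    have := abs_le_of_sq_le_sq hsq (norm_nonneg _)
    linarith [le_abs_self (‖y‖ + r / 2)]
  -- The negative part of `‖x‖ - 1`.
  set h : Vec d → ℝ := fun x => max (1 - ‖x‖) 0 with hh
  have hhc : Continuous h := by fun_prop
  have hhsupp : ∀ x, x ∉ B → h x = 0 := fun x hx => by
    have : 1 < ‖x‖ := by simpa [hB] using hx
    simp only [hh]
    exact max_eq_right (by linarith)
  have hBint : ∀ f : Vec d → ℝ, Continuous f → IntegrableOn f B := fun f hf =>
    hf.continuousOn.integrableOn_compact (isCompact_closedBall 0 1)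
  have hhint : Integrable h :=
    (integrableOn_iff_integrable_of_support_subset (fun x hx => by
      by_contra hxB; exact hx (hhsupp x hxB))).1 (hBint h hhc)
  have hhB : ∫ x, h x = ∫ x in B, (1 - ‖x‖) := by
    rw [← setIntegral_eq_integral_of_forall_compl_eq_zero hhsupp]
    refine setIntegral_congr_fun Metric.isClosed_closedBall.measurableSet fun x hx => ?_
    have : ‖x‖ ≤ 1 := by simpa [hB] using hx
    simp only [hh]
    exact max_eq_left (by linarith)
  have hhv : ∫ x in B, h (x + v) ≤ ∫ x, h x := by
    rw [← integral_add_right_eq_self h v]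
    exact setIntegral_le_integral (hhint.comp_add_right v)
      (Filter.Eventually.of_forall fun x => le_max_right _ _)
  have hind : IntegrableOn (S.indicator fun _ => r / 4) B :=
    ((integrable_indicator_iff hSm).2 (integrableOn_const hSfin)).integrableOn
  have hmain : ∫ x in B, (S.indicator (fun _ => r / 4) x - h (x + v)) ≤
      ∫ x in B, (‖x + v‖ - 1) := by
    refine setIntegral_mono (hind.sub (hBint _ (by fun_prop))) (hBint _ (by fun_prop)) fun x => ?_
    by_cases hx : x ∈ S
    · have h1 := hSv x hx
      have h2 : 0 ≤ h (x + v) := le_max_right _ _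
      simp only [indicator_of_mem hx]
      linarith
    · have h2 : 1 - ‖x + v‖ ≤ h (x + v) := le_max_left _ _
      simp only [indicator_of_notMem hx]
      linarith
  have hone : IntegrableOn (fun _ : Vec d => (1 : ℝ)) B := hBint _ continuous_const
  rw [integral_sub hind (hBint _ (by fun_prop)), integral_sub (hBint _ (by fun_prop)) hone,
    setIntegral_indicator hSm, inter_eq_self_of_subset_right hSB, setIntegral_const] at hmain
  rw [integral_sub hone (hBint _ (by fun_prop))] at hhB
  simp only [smul_eq_mul] at hmain
  have hfinal : κ / 16 * r * min r 1 ≤ volume.real S * (r / 4) := by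
    have hm4 : min r 1 = 4 * s := by rw [hs]; ring
    have : s * κ ≤ volume.real S := (mul_le_mul_of_nonneg_left hκA hs0.le).trans hSA
    rw [hm4]
    nlinarith
  linarith

/-! ### The balancing translation -/

/-- In polar coordinates, being balanced up to degree `1` follows from `|E| = |𝔹|` (degree `0`) and
`∫_E x / ‖x‖ dx = 0` (degree `1`), the corresponding integral over `𝔹` vanishing by symmetry. -/
lemma balanced_of_integral {d : ℕ} (hd : 1 ≤ d) {E : Set (Vec d)} (hE : MeasurableSet E)
    (hvol : volume E = volume (Metric.closedBall (0 : Vec d) 1))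
    (hw : ∀ w : Vec d, ∫ x in E, ⟪‖x‖⁻¹ • x, w⟫ = 0) : BalancedUpTo d 1 E := by
  intro P hP
  obtain ⟨a, w, haw⟩ := eval_affine P hP
  set B := Metric.closedBall (0 : Vec d) 1 with hB
  have hBm : MeasurableSet B := Metric.isClosed_closedBall.measurableSet
  have hBfin : volume B ≠ ⊤ := Metric.isBounded_closedBall.measure_lt_top.ne
  set q : Vec d → ℝ := fun x => ⟪‖x‖⁻¹ • x, w⟫ with hq
  have hqm : Measurable q := by fun_prop
  have hqb : ∀ x, ‖q x‖ ≤ ‖w‖ := fun x => by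
    refine (norm_inner_le_norm (𝕜 := ℝ) _ _).trans ?_
    have : ‖‖x‖⁻¹ • x‖ ≤ 1 := by
      rw [norm_smul, norm_inv, norm_norm]
      exact inv_mul_le_one
    nlinarith [norm_nonneg w]
  have hqint : ∀ G : Set (Vec d), volume G ≠ ⊤ → IntegrableOn q G := fun G hG =>
    Measure.integrableOn_of_bounded hG hqm.aestronglyMeasurable (Filter.Eventually.of_forall hqb)
  have hcint : ∀ G : Set (Vec d), volume G ≠ ⊤ → IntegrableOn (fun _ => a) G := fun G hG =>
    integrableOn_const hG
  have hpint : ∀ G : Set (Vec d), volume G ≠ ⊤ → IntegrableOn (fun x => a + q x) G := fun G hG =>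
    (hcint G hG).add (hqint G hG)
  have hval : ∀ G : Set (Vec d), volume G ≠ ⊤ →
      ∫ x in G, (a + q x) = volume.real G * a + ∫ x in G, q x := fun G hG => by
    rw [integral_add (hcint G hG) (hqint G hG), setIntegral_const, smul_eq_mul]
  have hEfin : volume E ≠ ⊤ := hvol ▸ hBfin
  -- `q` is odd and `B` is symmetric.
  have hBw : ∫ x in B, q x = 0 := by
    have h1 : ∫ x in B, q x = ∫ x in B, -q x := by
      rw [← integral_indicator hBm, ← integral_indicator hBm, ← integral_neg_eq_self]
      refine integral_congr_ae (Filter.Eventually.of_forall fun x => ?_)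
      have hneg : q (-x) = -q x := by simp [hq]
      by_cases hx : x ∈ B
      · have hx' : -x ∈ B := by simpa [hB] using hx
        simp [hx, hx', hneg]
      · have hx' : -x ∉ B := by simpa [hB] using hx
        simp [hx, hx']
    rw [integral_neg] at h1
    linarith
  set f : Vec d → ℝ := fun x => (ind E x - ind B x) * (a + q x) with hf
  have hfeq : f = fun x => E.indicator (fun x => a + q x) x - B.indicator (fun x => a + q x) x := by
    funext x
    simp only [hf, ind, sub_mul]
    by_cases h1 : x ∈ E <;> by_cases h2 : x ∈ B <;> simp [h1, h2]
  have hiE := (integrable_indicator_iff hE).2 (hpint E hEfin)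
  have hiB := (integrable_indicator_iff hBm).2 (hpint B hBfin)
  have hfint : Integrable f := by rw [hfeq]; exact hiE.sub hiB
  have hpol := integral_polar hd hfint
  have hf0 : ∫ x, f x = 0 := by
    rw [hfeq, integral_sub hiE hiB, integral_indicator hE, integral_indicator hBm,
      hval E hEfin, hval B hBfin, hBw, hw w, measureReal_def, measureReal_def, hvol, sub_self]
  rw [← hf0, ← hpol]
  refine integral_congr_ae (Filter.Eventually.of_forall fun θ => ?_)
  simp only [FE]
  rw [haw θ, ← integral_mul_const]
  refine setIntegral_congr_fun measurableSet_Ioi fun t ht => ?_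
  have ht0 : (0 : ℝ) < t := ht
  have hθ : ‖(θ : Vec d)‖ = 1 := by simp
  have hqθ : q (t • (θ : Vec d)) = ⟪(θ : Vec d), w⟫ := by
    simp only [hq]
    rw [norm_smul, hθ, mul_one, Real.norm_of_nonneg ht0.le, inv_smul_smul₀ ht0.ne']
  simp only [hf, hqθ]
  ring

/-- Minimality of `v` for `E` against the competitor `0`, transferred from `E` to `𝔹` at the cost of
`|E Δ 𝔹| ‖v‖`, as `|‖x + v‖ - ‖x‖| ≤ ‖v‖`. -/
lemma median_small {d : ℕ} {E : Set (Vec d)} (hE : MeasurableSet E)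
    (hb : Bornology.IsBounded E) {v : Vec d}
    (hv : ∀ u : Vec d, ∫ x in E, ‖x + v‖ ≤ ∫ x in E, ‖x + u‖) :
    (∫ x in Metric.closedBall (0 : Vec d) 1, ‖x + v‖) -
        ∫ x in Metric.closedBall (0 : Vec d) 1, ‖x‖ ≤
      volume.real (symmDiff E (Metric.closedBall (0 : Vec d) 1)) * ‖v‖ := by
  set B := Metric.closedBall (0 : Vec d) 1 with hB
  have hBm : MeasurableSet B := Metric.isClosed_closedBall.measurableSet
  have hBb : Bornology.IsBounded B := Metric.isBounded_closedBall
  have hDm : MeasurableSet (symmDiff E B) := hE.symmDiff hBm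
  have hDfin : volume (symmDiff E B) ≠ ⊤ :=
    ((measure_mono symmDiff_subset_union).trans_lt (hb.union hBb).measure_lt_top).ne
  set g : Vec d → ℝ := fun x => ‖x + v‖ - ‖x‖ with hg
  have hgi : ∀ G : Set (Vec d), Bornology.IsBounded G → IntegrableOn g G := fun G hG => by
    have h0 := integrableOn_norm_add hG 0
    simp only [add_zero] at h0
    exact (integrableOn_norm_add hG v).sub h0
  have hgG : ∀ G : Set (Vec d), Bornology.IsBounded G →
      ∫ x in G, g x = (∫ x in G, ‖x + v‖) - ∫ x in G, ‖x‖ := fun G hG => by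
    have h0 := integrableOn_norm_add hG 0
    simp only [add_zero] at h0
    exact integral_sub (integrableOn_norm_add hG v) h0
  have hgE : ∫ x in E, g x ≤ 0 := by
    rw [hgG E hb]
    simpa using hv 0
  rw [← hgG B hBb]
  have hiB := (integrable_indicator_iff hBm).2 (hgi B hBb)
  have hiE := (integrable_indicator_iff hE).2 (hgi E hb)
  have hiD : Integrable ((symmDiff E B).indicator fun _ => ‖v‖) :=
    (integrable_indicator_iff hDm).2 (integrableOn_const hDfin)
  have key : ∫ x, (B.indicator g x - E.indicator g x) ≤
      ∫ x, (symmDiff E B).indicator (fun _ => ‖v‖) x := by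
    refine integral_mono (hiB.sub hiE) hiD fun x => ?_
    have := abs_le.1 (norm_add_sub_norm_le x v)
    have hn := norm_nonneg v
    by_cases h1 : x ∈ E <;> by_cases h2 : x ∈ B <;>
      simp [h1, h2, mem_symmDiff, hg] <;> linarith
  rw [integral_sub hiB hiE, integral_indicator hBm, integral_indicator hE,
    integral_indicator hDm, setIntegral_const, smul_eq_mul] at key
  linarith

/-- Balancing a near-ball set up to degree 1 by a translation. -/
theorem balancing_translation (d : ℕ) (hd : 1 ≤ d) :
    ∃ c > (0 : ℝ), ∀ lam : ℝ, 1 ≤ lam → ∃ Cl : ℝ,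
      ∀ E : Set (Vec d), MeasurableSet E →
        volume E = volume (Metric.closedBall (0 : Vec d) 1) →
        lam * (volume (symmDiff E (Metric.closedBall (0 : Vec d) 1))).toReal ≤ c →
        symmDiff E (Metric.closedBall (0 : Vec d) 1) ⊆
          {x : Vec d | |‖x‖ - 1| ≤
            lam * (volume (symmDiff E (Metric.closedBall (0 : Vec d) 1))).toReal} →
        ∃ v : Vec d,
          BalancedUpTo d 1 ((fun x => x + v) '' E) ∧
          ‖v‖ ≤ Cl * (volume (symmDiff E (Metric.closedBall (0 : Vec d) 1))).toReal ∧
          symmDiff ((fun x => x + v) '' E) (Metric.closedBall (0 : Vec d) 1) ⊆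
            {x : Vec d | |‖x‖ - 1| ≤
              Cl * (volume (symmDiff E (Metric.closedBall (0 : Vec d) 1))).toReal} := by
  set κ := volume.real (Metric.closedBall (0 : Vec d) (1 / 8)) with hκ
  have hκ0 : 0 < κ := ENNReal.toReal_pos
    (Metric.measure_closedBall_pos volume _ (by norm_num)).ne'
    Metric.isBounded_closedBall.measure_lt_top.ne
  refine ⟨κ / 32, by positivity, fun lam hlam => ⟨lam + 16 / κ, ?_⟩⟩
  intro E hE hvol hc hsub
  have hgrow := ball_growth hd
  set B := Metric.closedBall (0 : Vec d) 1 with hB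
  set δ := (volume (symmDiff E B)).toReal with hδ
  have hδ0 : 0 ≤ δ := ENNReal.toReal_nonneg
  have hδc : δ ≤ κ / 32 := by nlinarith
  have hmemB : ∀ x : Vec d, x ∈ B ↔ ‖x‖ ≤ 1 := fun x => by simp [hB]
  have hEin : ∀ x ∈ E, ‖x‖ ≤ 1 + lam * δ := fun x hx => by
    by_cases hxB : x ∈ B
    · have := (hmemB x).1 hxB
      nlinarith
    · have h : |‖x‖ - 1| ≤ lam * δ := hsub (Or.inl ⟨hx, hxB⟩)
      have := (abs_le.1 h).2
      linarith
  have hEout : ∀ x, x ∉ E → 1 - lam * δ ≤ ‖x‖ := fun x hx => by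
    by_cases hxB : x ∈ B
    · have h : |‖x‖ - 1| ≤ lam * δ := hsub (Or.inr ⟨hxB, hx⟩)
      have := (abs_le.1 h).1
      linarith
    · rw [hmemB, not_le] at hxB
      nlinarith
  have hb : Bornology.IsBounded E :=
    Metric.isBounded_closedBall.subset (s := E) (t := Metric.closedBall (0 : Vec d) (1 + lam * δ))
      fun x hx => by simpa using hEin x hx
  have hpos : volume E ≠ 0 := by
    rw [hvol]
    exact (Metric.measure_closedBall_pos volume _ one_pos).ne'
  obtain ⟨v, hv⟩ := exists_median hb hpos
  have hvb : ‖v‖ ≤ 16 / κ * δ := by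
    rcases eq_or_ne v 0 with rfl | hv0
    · simp only [norm_zero]; positivity
    have hr : 0 < ‖v‖ := norm_pos_iff.2 hv0
    have h1 : κ / 16 * ‖v‖ * min ‖v‖ 1 ≤ δ * ‖v‖ := (hgrow v).trans (median_small hE hb hv)
    have h2 : κ / 16 * min ‖v‖ 1 ≤ δ := by
      refine le_of_mul_le_mul_right ?_ hr
      linarith
    have h3 : min ‖v‖ 1 = ‖v‖ := by
      refine min_eq_left ?_
      by_contra! hlt
      rw [min_eq_right hlt.le] at h2
      linarith
    rw [h3] at h2
    rw [div_mul_eq_mul_div, le_div_iff₀ hκ0]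
    linarith
  refine ⟨v, ?_, ?_, ?_⟩
  · have hpre : (fun x => x + v) '' E = (fun x => x + -v) ⁻¹' E := by
      rw [image_add_right]
    have hmp := measurePreserving_add_right (volume : Measure (Vec d)) v
    have hemb := measurableEmbedding_addRight v
    refine balanced_of_integral hd (hemb.measurableSet_image.2 hE) ?_ fun w => ?_
    · rw [hpre, measure_preimage_add_right, hvol]
    · rw [hmp.setIntegral_image_emb hemb]
      exact median_balanced hd hb hv w
  · nlinarith
  · have hC : lam * δ + ‖v‖ ≤ (lam + 16 / κ) * δ := by linarith
    have hld : 0 ≤ lam * δ := by positivity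
    rintro x hx
    have hx1 := abs_le.1 (norm_add_sub_norm_le (x - v) v)
    rw [sub_add_cancel] at hx1
    refine (abs_le.2 ?_ : |‖x‖ - 1| ≤ _)
    rcases hx with ⟨⟨y, hy, rfl⟩, hxB⟩ | ⟨hxB, hxE⟩
    · rw [hmemB, not_le] at hxB
      have := hEin y hy
      simp only [add_sub_cancel_right] at hx1 hxB ⊢
      constructor <;> linarith
    · rw [hmemB] at hxB
      have : x - v ∉ E := fun h => hxE ⟨x - v, h, sub_add_cancel x v⟩
      have := hEout _ this
      constructor <;> linarith
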